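/- (Exactness of Gauss–Legendre quadrature) Let n ≥ 1 and let τ_1 < τ_2 < … < τ_n be the n distinct roots of the degree-n Legendre polynomial P_n in (−1,1). Let a < b be real numbers, and set σ_s = ((b−a)/2) τ_s + (a+b)/2 and w_s = (b−a)/((1−τ_s²) · (P_n′(τ_s))²) for s = 1, …, n. Then for every real polynomial q of degree at most 2n − 1, ∫_a^b q(x) dx = Σ_{s=1}^n w_s · q(σ_s). -/

import Mathlib

open MeasureTheory

/-- The Legendre polynomial of degree `n` on `[−1,1]`, via the Rodrigues formula
`P_n(y) = (1/(2^n n!)) (d/dy)^n [(y² − 1)^n]`. -/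
noncomputable def legendreP (n : ℕ) (y : ℝ) : ℝ :=
  (1 / ((2 : ℝ) ^ n * (n.factorial : ℝ))) * iteratedDeriv n (fun z : ℝ => (z ^ 2 - 1) ^ n) y

/-!
The classical proof of Gaussian exactness, arranged so that neither Lagrange interpolation nor the
Legendre differential equation is needed.

Let `L = P_n` as a polynomial. Integrating by parts `n` times in the Rodrigues formula shows that
`L` is orthogonal on `[-1, 1]` to every polynomial of degree `< n` (`integral_legendrePoly_mul`);
the Leibniz rule at the endpoints gives `L(1)² = L(-1)² = 1`. As `L` is nonzero of degree at most
`n` and has the `n` distinct roots `τ_s`, it is `c ∏ (X - τ_s)` with `c ≠ 0`.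

Put `ℓ_s = L / (X - τ_s)`, so that `ℓ_s(τ_t) = 0` for `t ≠ s` and `ℓ_s(τ_s) = L'(τ_s) ≠ 0`.
For `deg Q ≤ 2n - 1` the polynomial `Q - ∑ Q(τ_s) L'(τ_s)⁻² ℓ_s²` vanishes at every node, hence is
`L g` with `deg g < n` and has integral zero. Therefore
`∫ Q = ∑ Q(τ_s) L'(τ_s)⁻² ∫ ℓ_s²`.
Finally `((X - τ_s) ℓ_s²)' = ℓ_s² + 2 L ℓ_s'`, whose last term integrates to zero by
orthogonality, so `∫ ℓ_s²` equals the boundary term `1 / (1 - τ_s) + 1 / (1 + τ_s) = 2 / (1 - τ_s²)`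
(`integral_sq_of_legendrePoly_eq`). An affine substitution carries `[-1, 1]` to `[a, b]`.
-/

open Polynomial in
/-- The Legendre polynomial `P_n` as an element of `ℝ[X]`, by the Rodrigues formula. -/
noncomputable def legendrePoly (n : ℕ) : ℝ[X] :=
  C (1 / ((2 : ℝ) ^ n * (n.factorial : ℝ))) * derivative^[n] ((X ^ 2 - 1) ^ n)

section Aux

open Polynomial

theorem legendreP_eq_eval (n : ℕ) : legendreP n = fun y => (legendrePoly n).eval y := by
  have key : ∀ (k : ℕ) (p : ℝ[X]),
      iteratedDeriv k (fun z => p.eval z) = fun z => (derivative^[k] p).eval z := by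
    intro k
    induction k with
    | zero => intro p; simp
    | succ k ih =>
      intro p
      rw [iteratedDeriv_succ', Function.iterate_succ_apply, ← ih]
      congr 1
      funext z
      exact p.deriv
  funext y
  have h := congrFun (key n ((X ^ 2 - 1) ^ n)) y
  simp only [eval_pow, eval_sub, eval_X, eval_one] at h
  simp only [legendreP, legendrePoly, eval_mul, eval_C, h]

theorem natDegree_legendrePoly_le (n : ℕ) : (legendrePoly n).natDegree ≤ n := by
  refine (natDegree_C_mul_le _ _).trans ((natDegree_iterate_derivative _ _).trans ?_)
  have h : ((X ^ 2 - 1 : ℝ[X]) ^ n).natDegree ≤ n * 2 :=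
    natDegree_pow_le_of_le n (by compute_degree)
  omega

theorem eval_one_legendrePoly (n : ℕ) : (legendrePoly n).eval 1 = 1 := by
  have h := aeval_iterate_derivative_self (A := ℝ) ((X ^ 2 - 1 : ℝ[X]) ^ n) n
    (p' := (X + 1) ^ n) (1 : ℝ) (by rw [← mul_pow]; simp; ring)
  simp only [coe_aeval_eq_eval] at h
  rw [legendrePoly, eval_mul, h]
  have := Nat.factorial_ne_zero n
  simp
  norm_num
  field_simp

theorem eval_neg_one_legendrePoly_sq (n : ℕ) : (legendrePoly n).eval (-1) ^ 2 = 1 := by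
  have h := aeval_iterate_derivative_self (A := ℝ) ((X ^ 2 - 1 : ℝ[X]) ^ n) n
    (p' := (X - 1) ^ n) (-1 : ℝ) (by rw [← mul_pow]; simp; ring)
  simp only [coe_aeval_eq_eval] at h
  rw [legendrePoly, eval_mul, h]
  have := Nat.factorial_ne_zero n
  have h2 : ((-1 - 1 : ℝ) ^ n) ^ 2 = (2 ^ n) ^ 2 := by
    rw [← pow_mul, mul_comm, pow_mul, ← pow_mul 2 n 2, mul_comm n 2, pow_mul]; norm_num
  simp only [eval_C, nsmul_eq_mul, eval_pow, eval_sub, eval_X, eval_one, mul_pow, h2]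
  field_simp

theorem integral_eval_derivative (p : ℝ[X]) (u v : ℝ) :
    ∫ x in u..v, (derivative p).eval x = p.eval v - p.eval u :=
  intervalIntegral.integral_eq_sub_of_hasDerivAt (fun x _ => p.hasDerivAt x)
    ((derivative p).continuous.intervalIntegrable _ _)

/-- Repeated integration by parts: `k ≤ n` derivatives of `(X² - 1)ⁿ` are orthogonal to
polynomials of degree less than `k`, since the boundary terms retain a factor `X² - 1`. -/
theorem integral_iterate_derivative_mul (n : ℕ) :
    ∀ k ≤ n, ∀ r : ℝ[X], derivative^[k] r = 0 →
      ∫ x in (-1 : ℝ)..1, (derivative^[k] ((X ^ 2 - 1 : ℝ[X]) ^ n) * r).eval x = 0 := by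
  intro k
  induction k with
  | zero =>
    intro _ r hr
    simp only [Function.iterate_zero, id_eq] at hr
    simp [hr]
  | succ k ih =>
    intro hk r hr
    set U := derivative^[k] ((X ^ 2 - 1 : ℝ[X]) ^ n) with hU
    have hdvd : (X ^ 2 - 1 : ℝ[X]) ∣ U :=
      (dvd_pow_self _ (by omega : n - k ≠ 0)).trans
        (pow_sub_dvd_iterate_derivative_of_pow_dvd k dvd_rfl)
    obtain ⟨V, hV⟩ := hdvd
    have h1 := ih (by omega) (derivative r) (by rwa [← Function.iterate_succ_apply])
    have h2 := integral_eval_derivative (U * r) (-1) 1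
    rw [derivative_mul] at h2
    simp only [eval_add] at h2
    rw [intervalIntegral.integral_add ((Polynomial.continuous _).intervalIntegrable _ _)
      ((Polynomial.continuous _).intervalIntegrable _ _), h1] at h2
    rw [Function.iterate_succ_apply', ← hU]
    simpa [hV] using h2

/-- Orthogonality of `P_n` to polynomials of degree less than `n`, phrased as the vanishing of the
`n`-th derivative. -/
theorem integral_legendrePoly_mul (n : ℕ) (r : ℝ[X]) (hr : derivative^[n] r = 0) :
    ∫ x in (-1 : ℝ)..1, (legendrePoly n * r).eval x = 0 := by
  have h := integral_iterate_derivative_mul n n le_rfl r hr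
  simp only [legendrePoly, mul_assoc, eval_C_mul]
  rw [intervalIntegral.integral_const_mul, h, mul_zero]

/-- The integral of `ℓ²` for `ℓ = P_n / (X - t)`: integrate `((X - t) ℓ²)' = ℓ² + 2 P_n ℓ'`. -/
theorem integral_sq_of_legendrePoly_eq (n : ℕ) (t : ℝ) (ht : t ∈ Set.Ioo (-1 : ℝ) 1) (l : ℝ[X])
    (hl : legendrePoly n = (X - C t) * l) :
    ∫ x in (-1 : ℝ)..1, (l ^ 2).eval x = 2 / (1 - t ^ 2) := by
  have hl0 : l ≠ 0 := by
    rintro rfl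
    have := eval_one_legendrePoly n
    simp [hl] at this
  have hdeg : 1 + l.natDegree ≤ n := by
    have h := natDegree_legendrePoly_le n
    rwa [hl, natDegree_mul (X_sub_C_ne_zero t) hl0, natDegree_X_sub_C] at h
  have h0 := integral_legendrePoly_mul n (2 * derivative l) (by
    have : (2 * derivative l : ℝ[X]) = derivative (2 * l) := by simp
    rw [this, ← Function.iterate_succ_apply]
    apply iterate_derivative_eq_zero
    have : (2 * l : ℝ[X]).natDegree ≤ l.natDegree := natDegree_C_mul_le (2 : ℝ) l
    omega)
  have h1 := integral_eval_derivative ((X - C t) * l ^ 2) (-1) 1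
  have h2 : derivative ((X - C t) * l ^ 2) = l ^ 2 + legendrePoly n * (2 * derivative l) := by
    rw [hl]
    have h2 : (C 2 : ℝ[X]) = 2 := rfl
    simp [derivative_mul, derivative_pow, h2]
    ring
  rw [h2] at h1
  simp only [eval_add] at h1
  rw [intervalIntegral.integral_add ((Polynomial.continuous _).intervalIntegrable _ _)
      ((Polynomial.continuous _).intervalIntegrable _ _), h0, add_zero] at h1
  rw [h1]
  have e1 := eval_one_legendrePoly n
  have e2 := eval_neg_one_legendrePoly_sq n
  rw [hl] at e1 e2
  simp only [eval_mul, eval_sub, eval_X, eval_C, eval_pow] at e1 e2 ⊢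
  have p1 : 1 - t ≠ 0 := by linarith [ht.2]
  have p2 : 1 + t ≠ 0 := by linarith [ht.1]
  have p3 : 1 - t ^ 2 ≠ 0 := by
    have : 1 - t ^ 2 = (1 - t) * (1 + t) := by ring
    rw [this]; exact mul_ne_zero p1 p2
  have e1' : (1 - t) * l.eval 1 ^ 2 = 1 / (1 - t) := by
    rw [eq_div_iff p1]; linear_combination ((1 - t) * l.eval 1 + 1) * e1
  have e2' : (-1 - t) * l.eval (-1) ^ 2 = - (1 / (1 + t)) := by
    rw [← neg_div, eq_div_iff p2]; linear_combination - e2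
  rw [e1', e2']
  field_simp
  ring

/-- Exactness on the reference interval `[-1, 1]`. -/
theorem integral_eq_sum_legendrePoly (n : ℕ) (hn : 1 ≤ n)
    (τ : Fin n → ℝ) (hinj : Function.Injective τ)
    (hτmem : ∀ s, τ s ∈ Set.Ioo (-1 : ℝ) 1)
    (hτroot : ∀ s, (legendrePoly n).eval (τ s) = 0)
    (Q : ℝ[X]) (hQ : Q.natDegree ≤ 2 * n - 1) :
    ∫ x in (-1 : ℝ)..1, Q.eval x =
      ∑ s : Fin n, 2 / ((1 - τ s ^ 2) * ((derivative (legendrePoly n)).eval (τ s)) ^ 2) *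
        Q.eval (τ s) := by
  set L := legendrePoly n with hL
  set N : ℝ[X] := ∏ s : Fin n, (X - C (τ s)) with hN
  have hNdeg : N.natDegree = n := by rw [hN, natDegree_finsetProd_X_sub_C_eq_card]; simp
  have hN0 : N ≠ 0 := (monic_prod_X_sub_C τ Finset.univ).ne_zero
  have hdvd : ∀ p : ℝ[X], (∀ s, p.eval (τ s) = 0) → N ∣ p := fun p hp =>
    Finset.prod_dvd_of_coprime
      (fun s _ t _ hst => pairwise_coprime_X_sub_C hinj hst)
      (fun s _ => dvd_iff_isRoot.2 (hp s))
  have hL0 : L ≠ 0 := by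
    intro h
    have := eval_one_legendrePoly n
    simp [← hL, h] at this
  obtain ⟨c, hc0, hLc⟩ : ∃ c : ℝ, c ≠ 0 ∧ L = C c * N := by
    obtain ⟨h, hh⟩ := hdvd L hτroot
    have hh0 : h ≠ 0 := by rintro rfl; exact hL0 (by simpa using hh)
    have hd := natDegree_legendrePoly_le n
    rw [← hL, hh, natDegree_mul hN0 hh0, hNdeg] at hd
    rw [eq_C_of_natDegree_eq_zero (by omega : h.natDegree = 0)] at hh hh0
    exact ⟨h.coeff 0, fun h' => hh0 (by rw [h', C_0]), by rw [mul_comm]; exact hh⟩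
  let l : Fin n → ℝ[X] := fun s => C c * ∏ t ∈ Finset.univ.erase s, (X - C (τ t))
  have hl : ∀ s, L = (X - C (τ s)) * l s := by
    intro s
    rw [hLc, hN, ← Finset.mul_prod_erase Finset.univ _ (Finset.mem_univ s)]
    simp only [l]; ring
  have hlne : ∀ s, (l s).eval (τ s) ≠ 0 := by
    intro s
    simp only [l, eval_C_mul, eval_prod, eval_sub, eval_X, eval_C]
    refine mul_ne_zero hc0 (Finset.prod_ne_zero_iff.2 fun t ht => sub_ne_zero.2 fun h => ?_)
    exact (Finset.ne_of_mem_erase ht) (hinj h.symm)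
  have hlz : ∀ s t, t ≠ s → (l s).eval (τ t) = 0 := by
    intro s t hts
    have h := hτroot t
    rw [hl s, eval_mul, eval_sub, eval_X, eval_C] at h
    exact (mul_eq_zero.1 h).resolve_left (sub_ne_zero.2 fun h' => hts (hinj h'))
  have hder : ∀ s, (derivative L).eval (τ s) = (l s).eval (τ s) := by
    intro s
    rw [hl s, derivative_mul]
    simp
  have hldeg : ∀ s, (l s).natDegree ≤ n - 1 := by
    intro s
    refine (natDegree_C_mul_le _ _).trans ?_
    rw [natDegree_finsetProd_X_sub_C_eq_card]
    simp
  -- `S` interpolates `Q` at the nodes by squares, so that its integral needs only `∫ ℓ_s²`.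
  set S : ℝ[X] := ∑ s, C (Q.eval (τ s) / (l s).eval (τ s) ^ 2) * l s ^ 2 with hS
  have hSev : ∀ t, S.eval (τ t) = Q.eval (τ t) := by
    intro t
    rw [hS, eval_finsetSum, Finset.sum_eq_single t]
    · have := hlne t
      simp only [eval_C_mul, eval_pow]
      field_simp
    · intro s _ hst
      simp [hlz s t hst.symm]
    · simp
  have hSdeg : S.natDegree ≤ 2 * n - 1 := by
    refine natDegree_sum_le_of_forall_le _ _ fun s _ => ?_
    refine (natDegree_C_mul_le _ _).trans ((natDegree_pow_le_of_le 2 (hldeg s)).trans ?_)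
    omega
  have hDint : ∫ x in (-1 : ℝ)..1, (Q - S).eval x = 0 := by
    obtain ⟨g, hg⟩ := hdvd (Q - S) (fun s => by rw [eval_sub, hSev, sub_self])
    have hg' : Q - S = L * (C c⁻¹ * g) := by
      have : (C c * C c⁻¹ : ℝ[X]) = 1 := by rw [← C_mul, mul_inv_cancel₀ hc0, C_1]
      rw [hg, hLc]; linear_combination (- N * g) * this
    rw [hg']
    apply integral_legendrePoly_mul
    apply iterate_derivative_eq_zero
    refine (natDegree_C_mul_le _ _).trans_lt ?_
    by_cases hg0 : g = 0
    · rw [hg0, natDegree_zero]; omega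
    · have h1 : (Q - S).natDegree ≤ 2 * n - 1 := natDegree_sub_le_of_le hQ hSdeg |>.trans (by simp)
      rw [hg, natDegree_mul hN0 hg0, hNdeg] at h1
      omega
  have hQS : ∫ x in (-1 : ℝ)..1, Q.eval x = ∫ x in (-1 : ℝ)..1, S.eval x := by
    simp only [eval_sub] at hDint
    rw [intervalIntegral.integral_sub (Q.continuous.intervalIntegrable _ _)
      (S.continuous.intervalIntegrable _ _)] at hDint
    linarith
  rw [hQS, hS]
  simp only [eval_finsetSum]
  rw [intervalIntegral.integral_finsetSum
    (fun s _ => (Polynomial.continuous _).intervalIntegrable _ _)]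
  refine Finset.sum_congr rfl fun s _ => ?_
  simp only [eval_C_mul]
  rw [intervalIntegral.integral_const_mul,
    integral_sq_of_legendrePoly_eq n (τ s) (hτmem s) (l s) (hl s), hder, div_mul_div_comm,
    div_mul_eq_mul_div, mul_comm (Q.eval _), mul_comm (_ ^ 2)]

end Aux

/-- Exactness of the `n`-point Gauss–Legendre quadrature rule on `[a,b]` for
polynomials of degree at most `2n − 1`. -/
theorem gauss_legendre_quadrature_exact (n : ℕ) (hn : 1 ≤ n)
    (τ : Fin n → ℝ) (hτmono : StrictMono τ)
    (hτmem : ∀ s, τ s ∈ Set.Ioo (-1 : ℝ) 1)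
    (hτroot : ∀ s, legendreP n (τ s) = 0)
    (a b : ℝ) (hab : a < b) :
    ∀ q : Polynomial ℝ, q.natDegree ≤ 2 * n - 1 →
      (∫ x in a..b, q.eval x) =
        ∑ s : Fin n,
          ((b - a) / ((1 - τ s ^ 2) * (deriv (legendreP n) (τ s)) ^ 2)) *
            q.eval (((b - a) / 2) * τ s + (a + b) / 2) := by
  intro q hq
  have hP := legendreP_eq_eval n
  have hroot : ∀ s, (legendrePoly n).eval (τ s) = 0 := fun s => by
    simpa only [hP] using hτroot s
  have hdeg : (q.comp (Polynomial.C ((b - a) / 2) * Polynomial.X +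
      Polynomial.C ((a + b) / 2))).natDegree ≤ 2 * n - 1 := by
    refine Polynomial.natDegree_comp_le.trans ?_
    calc _ ≤ q.natDegree * 1 := Nat.mul_le_mul_left _ Polynomial.natDegree_linear_le
      _ ≤ _ := by omega
  have h := integral_eq_sum_legendrePoly n hn τ hτmono.injective hτmem hroot _ hdeg
  simp only [Polynomial.eval_comp, Polynomial.eval_add, Polynomial.eval_mul, Polynomial.eval_C,
    Polynomial.eval_X] at h
  have hsub := intervalIntegral.mul_integral_comp_mul_add (a := -1) (b := 1)
    (f := fun x => q.eval x) ((b - a) / 2) ((a + b) / 2)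
  rw [show (b - a) / 2 * -1 + (a + b) / 2 = a by ring,
    show (b - a) / 2 * 1 + (a + b) / 2 = b by ring, h] at hsub
  rw [← hsub, Finset.mul_sum]
  refine Finset.sum_congr rfl fun s _ => ?_
  have hd : deriv (legendreP n) (τ s) = (Polynomial.derivative (legendrePoly n)).eval (τ s) := by
    rw [hP]; exact Polynomial.deriv _
  rw [hd]
  ring
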